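/- arXiv:2205.08873 — 3 statements merged into one kernel-verified Lean document; each statement's English description precedes it below -/
import Mathlib

section
/- Let $G$ be a triangle-free simple graph on $n$ vertices with adjacency-matrix eigenvalues $\mu_1 \geq \mu_2 \geq \dots \geq \mu_n$. Then $\mu_1 (\mu_1 - \mu_n) \leq -n\,\mu_n$. -/
/-!
Let `A` be the adjacency matrix, `M` its greatest and `m` its least eigenvalue. Replacing the
entries of a unit `M`-eigenvector by their absolute values does not decrease the quadratic form of
`A`, so there is an entrywise nonnegative unit `M`-eigenvector `x`. Splitting off the component
along `x` shows `A ≥ m + (M - m) x xᵀ`. On the restriction of `x` to an independent set the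
quadratic form of `A` vanishes, so every independent set `s` satisfies the weighted Hoffman bound
`(M - m) ∑_{i ∈ s} xᵢ² ≤ -m`.

In a triangle-free graph the neighbourhoods are independent, i.e. `(M - m) A x² ≤ -m` entrywise.
Pairing with `x` gives `(M - m) M ∑ xᵢ³ ≤ -m ∑ xᵢ`, and `∑ xᵢ ≤ n ∑ xᵢ³` by Chebyshev's sum
inequality.
-/

open Matrix SimpleGraph

section SymmetricMatrix

variable {ι : Type*} [Fintype ι] {A : Matrix ι ι ℝ} {M m : ℝ} {x : ι → ℝ}

lemma dotProduct_mulVec_le_abs {κ R : Type*} [Fintype κ] [CommRing R] [LinearOrder R]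
    [IsStrictOrderedRing R] {B : Matrix ι κ R} (hB : ∀ i j, 0 ≤ B i j) (u : ι → R) (v : κ → R) :
    u ⬝ᵥ B *ᵥ v ≤ |u| ⬝ᵥ B *ᵥ |v| := by
  simp only [dotProduct, mulVec, Finset.mul_sum, Pi.abs_apply]
  refine Finset.sum_le_sum fun i _ => Finset.sum_le_sum fun j _ => ?_
  calc u i * (B i j * v j) ≤ |u i * (B i j * v j)| := le_abs_self _
    _ = |u i| * (B i j * |v j|) := by rw [abs_mul, abs_mul, abs_of_nonneg (hB i j)]

lemma abs_dotProduct_abs_self {R : Type*} [CommRing R] [LinearOrder R] [IsStrictOrderedRing R]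
    (u : ι → R) : |u| ⬝ᵥ |u| = u ⬝ᵥ u := by
  simp [dotProduct]

lemma dotProduct_mulVec_of_mulVec_eq_smul {R : Type*} [CommSemiring R] {B : Matrix ι ι R}
    (hB : B.IsSymm) {c : R} {x : ι → R} (hx : B *ᵥ x = c • x) (y : ι → R) :
    x ⬝ᵥ B *ᵥ y = c * (x ⬝ᵥ y) := by
  rw [dotProduct_mulVec, ← mulVec_transpose, hB.eq, hx, smul_dotProduct, smul_eq_mul]

lemma nonneg_of_mulVec_eq_smul (hA₀ : ∀ i j, 0 ≤ A i j) (hx₀ : 0 ≤ x) (hx : x ⬝ᵥ x = 1)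
    (hAx : A *ᵥ x = M • x) : 0 ≤ M := by
  have hAx₀ : 0 ≤ A *ᵥ x := fun i => dotProduct_nonneg_of_nonneg (hA₀ i) hx₀
  simpa [hAx, hx] using dotProduct_nonneg_of_nonneg hx₀ hAx₀

variable [DecidableEq ι]

open scoped ComplexOrder MatrixOrder in
lemma posSemidef_sub_algebraMap_of_mem_lowerBounds_spectrum {𝕜 : Type*} [RCLike 𝕜]
    {B : Matrix ι ι 𝕜} (hB : B.IsHermitian) (hm : m ∈ lowerBounds (spectrum ℝ B)) :
    (B - algebraMap ℝ _ m).PosSemidef :=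
  Matrix.le_iff.1 <| (algebraMap_le_iff_le_spectrum (ha := hB)).2 fun _ h => hm h

open scoped ComplexOrder MatrixOrder in
lemma posSemidef_algebraMap_sub_of_mem_upperBounds_spectrum {𝕜 : Type*} [RCLike 𝕜]
    {B : Matrix ι ι 𝕜} (hB : B.IsHermitian) (hM : M ∈ upperBounds (spectrum ℝ B)) :
    (algebraMap ℝ _ M - B).PosSemidef :=
  Matrix.le_iff.1 <| (le_algebraMap_iff_spectrum_le (ha := hB)).2 fun _ h => hM h

lemma mul_dotProduct_self_le_of_mem_lowerBounds_spectrum (hA : A.IsHermitian)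
    (hm : m ∈ lowerBounds (spectrum ℝ A)) (y : ι → ℝ) : m * (y ⬝ᵥ y) ≤ y ⬝ᵥ A *ᵥ y := by
  have h := (posSemidef_sub_algebraMap_of_mem_lowerBounds_spectrum hA hm).dotProduct_mulVec_nonneg y
  simpa [Algebra.algebraMap_eq_smul_one, sub_mulVec, smul_mulVec] using h

lemma mulVec_eq_smul_of_mul_dotProduct_self_le (hA : A.IsHermitian)
    (hM : M ∈ upperBounds (spectrum ℝ A)) {y : ι → ℝ} (hy : M * (y ⬝ᵥ y) ≤ y ⬝ᵥ A *ᵥ y) :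
    A *ᵥ y = M • y := by
  have hpsd := posSemidef_algebraMap_sub_of_mem_upperBounds_spectrum hA hM
  have hmulVec : (algebraMap ℝ _ M - A) *ᵥ y = M • y - A *ᵥ y := by
    simp [Algebra.algebraMap_eq_smul_one, sub_mulVec, smul_mulVec]
  have hform : star y ⬝ᵥ (algebraMap ℝ _ M - A) *ᵥ y = M * (y ⬝ᵥ y) - y ⬝ᵥ A *ᵥ y := by
    simp [hmulVec]
  have hzero := (hpsd.dotProduct_mulVec_zero_iff y).1 <|
    le_antisymm (by linarith) (hpsd.dotProduct_mulVec_nonneg y)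
  exact (sub_eq_zero.1 (hmulVec.symm.trans hzero)).symm

lemma exists_unit_eigenvector_of_mem_spectrum (hA : A.IsHermitian) (hM : M ∈ spectrum ℝ A) :
    ∃ u : ι → ℝ, u ⬝ᵥ u = 1 ∧ A *ᵥ u = M • u := by
  rw [hA.spectrum_real_eq_range_eigenvalues] at hM
  obtain ⟨i, rfl⟩ := hM
  refine ⟨hA.eigenvectorBasis i, ?_, hA.mulVec_eigenvectorBasis i⟩
  have h := EuclideanSpace.real_norm_sq_eq (hA.eigenvectorBasis i)
  rw [hA.eigenvectorBasis.norm_eq_one, one_pow] at h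
  simpa only [dotProduct, ← pow_two] using h.symm

lemma exists_nonneg_unit_eigenvector_of_isGreatest_spectrum (hA : A.IsHermitian)
    (hA₀ : ∀ i j, 0 ≤ A i j) (hM : IsGreatest (spectrum ℝ A) M) :
    ∃ x : ι → ℝ, 0 ≤ x ∧ x ⬝ᵥ x = 1 ∧ A *ᵥ x = M • x := by
  have hA_symm : A.IsSymm := isHermitian_iff_isSymm.1 hA
  obtain ⟨u, hu, hAu⟩ := exists_unit_eigenvector_of_mem_spectrum hA hM.1
  refine ⟨|u|, abs_nonneg u, (abs_dotProduct_abs_self u).trans hu,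
    mulVec_eq_smul_of_mul_dotProduct_self_le hA hM.2 ?_⟩
  calc M * (|u| ⬝ᵥ |u|) = u ⬝ᵥ A *ᵥ u := by
        rw [abs_dotProduct_abs_self, dotProduct_mulVec_of_mulVec_eq_smul hA_symm hAu]
    _ ≤ |u| ⬝ᵥ A *ᵥ |u| := dotProduct_mulVec_le_abs hA₀ u u

lemma add_mul_dotProduct_sq_le_of_mem_lowerBounds_spectrum (hA : A.IsHermitian)
    (hm : m ∈ lowerBounds (spectrum ℝ A)) (hx : x ⬝ᵥ x = 1) (hAx : A *ᵥ x = M • x) (y : ι → ℝ) :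
    m * (y ⬝ᵥ y) + (M - m) * (x ⬝ᵥ y) ^ 2 ≤ y ⬝ᵥ A *ᵥ y := by
  have hA_symm : A.IsSymm := isHermitian_iff_isSymm.1 hA
  set c := x ⬝ᵥ y with hc
  have hyx : y ⬝ᵥ x = c := dotProduct_comm y x
  have hnorm : (y - c • x) ⬝ᵥ (y - c • x) = y ⬝ᵥ y - c ^ 2 := by
    simp only [sub_dotProduct, dotProduct_sub, smul_dotProduct, dotProduct_smul, smul_eq_mul,
      hx, ← hc, hyx]
    ring
  have hform : (y - c • x) ⬝ᵥ A *ᵥ (y - c • x) = y ⬝ᵥ A *ᵥ y - M * c ^ 2 := by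
    simp only [mulVec_sub, mulVec_smul, sub_dotProduct, dotProduct_sub, smul_dotProduct,
      dotProduct_smul, smul_eq_mul, dotProduct_mulVec_of_mulVec_eq_smul hA_symm hAx, hAx, hx,
      ← hc, hyx]
    ring
  have hle := mul_dotProduct_self_le_of_mem_lowerBounds_spectrum hA hm (y - c • x)
  rw [hnorm, hform] at hle
  linarith

lemma le_diag_of_mem_lowerBounds_spectrum (hA : A.IsHermitian)
    (hm : m ∈ lowerBounds (spectrum ℝ A)) (i : ι) : m ≤ A i i := by
  simpa using mul_dotProduct_self_le_of_mem_lowerBounds_spectrum hA hm (Pi.single i 1)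

end SymmetricMatrix

lemma sum_pos_of_dotProduct_self_eq_one {ι : Type*} [Fintype ι] {x : ι → ℝ} (hx₀ : 0 ≤ x)
    (hx : x ⬝ᵥ x = 1) : 0 < ∑ i, x i :=
  Fintype.sum_pos <| hx₀.lt_of_ne <| by
    rintro rfl
    simp at hx

lemma sum_mul_sum_sq_le_card_mul_sum_cube {ι R : Type*} [Fintype ι] [CommRing R] [LinearOrder R]
    [IsStrictOrderedRing R] {x : ι → R} (hx₀ : 0 ≤ x) :
    (∑ i, x i) * ∑ i, x i ^ 2 ≤ Fintype.card ι * ∑ i, x i ^ 3 := by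
  have hmono : Monovary x (x ^ 2) := fun i j hij => (lt_of_pow_lt_pow_left₀ 2 (hx₀ j) hij).le
  simpa [pow_succ'] using hmono.sum_mul_sum_le_card_mul_sum

section Graph

variable {V : Type*} [Fintype V] {G : SimpleGraph V} [DecidableRel G.Adj]
  {M m : ℝ} {x : V → ℝ}

lemma indicator_dotProduct_adjMatrix_mulVec_eq_zero {R : Type*} [NonAssocSemiring R]
    {s : Set V} (hs : G.IsIndepSet s) (f g : V → R) :
    s.indicator f ⬝ᵥ G.adjMatrix R *ᵥ s.indicator g = 0 := by
  simp only [dotProduct, adjMatrix_mulVec_apply, Finset.mul_sum]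
  refine Finset.sum_eq_zero fun i _ => Finset.sum_eq_zero fun j hj => ?_
  have hij : G.Adj i j := (G.mem_neighborFinset i j).1 hj
  by_cases hi : i ∈ s
  · have hj : j ∉ s := fun hj => hs hi hj hij.ne hij
    rw [Set.indicator_of_notMem hj, mul_zero]
  · rw [Set.indicator_of_notMem hi, zero_mul]

variable [DecidableEq V]

lemma nonpos_of_mem_lowerBounds_spectrum_adjMatrix [Nonempty V]
    (hm : m ∈ lowerBounds (spectrum ℝ (G.adjMatrix ℝ))) : m ≤ 0 := by
  simpa using le_diag_of_mem_lowerBounds_spectrum (G.isHermitian_adjMatrix ℝ) hm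
    (Classical.arbitrary V)

lemma mul_sum_sq_le_of_isIndepSet (hm : m ∈ lowerBounds (spectrum ℝ (G.adjMatrix ℝ)))
    (hx : x ⬝ᵥ x = 1) (hAx : G.adjMatrix ℝ *ᵥ x = M • x) {s : Finset V}
    (hs : G.IsIndepSet s) : (M - m) * ∑ i ∈ s, x i ^ 2 ≤ -m := by
  set t := ∑ i ∈ s, x i ^ 2
  set y := (s : Set V).indicator x
  have hxy : x ⬝ᵥ y = t := by
    simp [dotProduct, y, t, Set.indicator_apply, Finset.sum_ite_mem, pow_two]
  have hyy : y ⬝ᵥ y = t := by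
    simp [dotProduct, y, t, Set.indicator_apply, Finset.sum_ite_mem, pow_two]
  have hle := add_mul_dotProduct_sq_le_of_mem_lowerBounds_spectrum
    (G.isHermitian_adjMatrix ℝ) hm hx hAx y
  rw [hyy, hxy, indicator_dotProduct_adjMatrix_mulVec_eq_zero hs] at hle
  obtain ht | ht : 0 = t ∨ 0 < t := (Finset.sum_nonneg fun i _ => sq_nonneg (x i)).eq_or_lt
  · have : Nonempty V := not_isEmpty_iff.1 fun _ => by simp at hx
    simpa [← ht] using nonpos_of_mem_lowerBounds_spectrum_adjMatrix hm
  · exact le_of_mul_le_mul_left (by linarith) ht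

lemma mul_mul_sum_cube_le_of_cliqueFree_three (hG : G.CliqueFree 3)
    (hm : m ∈ lowerBounds (spectrum ℝ (G.adjMatrix ℝ))) (hx₀ : 0 ≤ x) (hx : x ⬝ᵥ x = 1)
    (hAx : G.adjMatrix ℝ *ᵥ x = M • x) : (M - m) * (M * ∑ i, x i ^ 3) ≤ -m * ∑ i, x i := by
  have hcube : x ⬝ᵥ x ^ 2 = ∑ i, x i ^ 3 :=
    Finset.sum_congr rfl fun i _ => (pow_succ' (x i) 2).symm
  have hneighbor (v : V) : (M - m) * (G.adjMatrix ℝ *ᵥ x ^ 2) v ≤ -m := by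
    have hindep : G.IsIndepSet (G.neighborFinset v : Set V) := by
      simpa using isIndepSet_neighborSet_of_triangleFree G hG v
    simpa [adjMatrix_mulVec_apply] using mul_sum_sq_le_of_isIndepSet hm hx hAx hindep
  calc (M - m) * (M * ∑ i, x i ^ 3) = (M - m) * (x ⬝ᵥ G.adjMatrix ℝ *ᵥ x ^ 2) := by
        rw [dotProduct_mulVec_of_mulVec_eq_smul G.isSymm_adjMatrix hAx, hcube]
    _ = ∑ v, x v * ((M - m) * (G.adjMatrix ℝ *ᵥ x ^ 2) v) := by
        rw [dotProduct, Finset.mul_sum]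
        exact Finset.sum_congr rfl fun v _ => mul_left_comm _ _ _
    _ ≤ ∑ v, x v * -m := by
        gcongr with v
        exacts [hx₀ v, hneighbor v]
    _ = -m * ∑ v, x v := by rw [← Finset.sum_mul, mul_comm]

theorem triangle_free_eigenvalue_product_bound_general (hG : G.CliqueFree 3)
    (hM : IsGreatest (spectrum ℝ (G.adjMatrix ℝ)) M)
    (hm : m ∈ lowerBounds (spectrum ℝ (G.adjMatrix ℝ))) :
    M * (M - m) ≤ -(Fintype.card V : ℝ) * m := by
  have hA₀ (i j : V) : 0 ≤ G.adjMatrix ℝ i j := by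
    rw [adjMatrix_apply]
    positivity
  obtain ⟨x, hx₀, hx, hAx⟩ :=
    exists_nonneg_unit_eigenvector_of_isGreatest_spectrum (G.isHermitian_adjMatrix ℝ) hA₀ hM
  have hx_sq : ∑ i, x i ^ 2 = 1 := by simpa only [dotProduct, ← pow_two] using hx
  have hM₀ : 0 ≤ M := nonneg_of_mulVec_eq_smul hA₀ hx₀ hx hAx
  have hmM : 0 ≤ M - m := sub_nonneg.2 (hm hM.1)
  refine le_of_mul_le_mul_right ?_ (sum_pos_of_dotProduct_self_eq_one hx₀ hx)
  calc M * (M - m) * ∑ i, x i ≤ M * (M - m) * (Fintype.card V * ∑ i, x i ^ 3) := by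
        gcongr
        simpa [hx_sq] using sum_mul_sum_sq_le_card_mul_sum_cube hx₀
    _ = Fintype.card V * ((M - m) * (M * ∑ i, x i ^ 3)) := by ring
    _ ≤ Fintype.card V * (-m * ∑ i, x i) :=
        mul_le_mul_of_nonneg_left
          (mul_mul_sum_cube_le_of_cliqueFree_three hG hm hx₀ hx hAx) (Nat.cast_nonneg _)
    _ = -(Fintype.card V : ℝ) * m * ∑ i, x i := by ring

end Graph

/-- Let `G` be a triangle-free simple graph on `n` vertices with
adjacency-matrix eigenvalues `μ₁ ≥ ⋯ ≥ μₙ`. Then `μ₁ (μ₁ - μₙ) ≤ -n μₙ`. -/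
theorem triangle_free_eigenvalue_product_bound
    (n : ℕ) (hn : 0 < n) (G : SimpleGraph (Fin n)) [DecidableRel G.Adj]
    (hG : G.CliqueFree 3)
    (hA : (G.adjMatrix ℝ).IsHermitian)
    (μ : Fin n → ℝ) (hmono : Antitone μ)
    (hperm : ∃ σ : Equiv.Perm (Fin n), ∀ i, μ i = hA.eigenvalues (σ i)) :
    μ ⟨0, hn⟩ * (μ ⟨0, hn⟩ - μ ⟨n - 1, by omega⟩) ≤ -(n : ℝ) * μ ⟨n - 1, by omega⟩ := by
  obtain ⟨σ, hσ⟩ := hperm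
  have hspec : spectrum ℝ (G.adjMatrix ℝ) = Set.range μ :=
    hA.spectrum_real_eq_range_eigenvalues.trans <| by
      rw [show μ = hA.eigenvalues ∘ σ from funext hσ, EquivLike.range_comp]
  have hM : IsGreatest (spectrum ℝ (G.adjMatrix ℝ)) (μ ⟨0, hn⟩) := by
    rw [hspec]
    exact ⟨⟨_, rfl⟩, Set.forall_mem_range.2 fun i => hmono (Nat.zero_le i)⟩
  have hm : μ ⟨n - 1, by omega⟩ ∈ lowerBounds (spectrum ℝ (G.adjMatrix ℝ)) := by
    rw [hspec]
    exact Set.forall_mem_range.2 fun i => hmono (Nat.le_sub_one_of_lt i.isLt)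
  simpa using triangle_free_eigenvalue_product_bound_general hG hM hm
end

section
/- Let $G$ be a triangle-free simple graph on $n$ vertices with adjacency-matrix eigenvalues $\mu_1 \geq \mu_2 \geq \dots \geq \mu_n$. Then $\mu_1^2 \leq (-\mu_n)(n - \mu_1)$. -/
open Matrix SimpleGraph

/-! Let `A` be the adjacency matrix and `A x = m x`. In a triangle-free graph every neighbourhood
`N(v)` is independent, so the restriction `y` of `x` to `N(v)` satisfies `yᵀ A y = 0`. If `l` is at
most every eigenvalue, the form `A - l` is positive semidefinite, and Cauchy–Schwarz for it, applied
to `y` and `x`, becomes the weighted ratio bound `(m - l) ∑_{u ∈ N(v)} x_u² ≤ -l ‖x‖²`. Summing over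
`v` gives `(m - l) ∑_u deg(u) x_u² ≤ -l n ‖x‖²`, and the Laplacian being positive semidefinite gives
`m ‖x‖² ≤ ∑_u deg(u) x_u²`. -/

section Matrix

variable {𝕜 V : Type*} [RCLike 𝕜] [Fintype V] [DecidableEq V]

theorem spectrum_eq_range_of_eigenvalues_perm {A : Matrix V V 𝕜} (hA : A.IsHermitian) {μ : V → ℝ}
    (hμ : ∃ σ : Equiv.Perm V, ∀ i, μ i = hA.eigenvalues (σ i)) : spectrum ℝ A = Set.range μ := by
  obtain ⟨σ, hσ⟩ := hμ
  rw [hA.spectrum_real_eq_range_eigenvalues, funext hσ]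
  exact (σ.surjective.range_comp _).symm

open scoped MatrixOrder ComplexOrder in
theorem posSemidef_sub_smul_one_of_mem_lowerBounds_spectrum {A : Matrix V V 𝕜}
    (hA : A.IsHermitian) {l : ℝ} (hl : l ∈ lowerBounds (spectrum ℝ A)) :
    (A - l • (1 : Matrix V V 𝕜)).PosSemidef := by
  rw [← Matrix.le_iff, ← Algebra.algebraMap_eq_smul_one,
    algebraMap_le_iff_le_spectrum (ha := hA.isSelfAdjoint)]
  exact fun _ hx => hl hx

theorem exists_ne_zero_mulVec_eq_smul_of_mem_spectrum {K : Type*} [Field K] {A : Matrix V V K}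
    {m : K} (hm : m ∈ spectrum K A) : ∃ x ≠ 0, A *ᵥ x = m • x := by
  rw [← spectrum_toLin', ← Module.End.hasEigenvalue_iff_mem_spectrum] at hm
  obtain ⟨x, hx⟩ := hm.exists_hasEigenvector
  exact ⟨x, hx.2, hx.apply_eq_smul⟩

end Matrix

section Semiring

variable {R V : Type*} [NonAssocSemiring R] [Fintype V] {G : SimpleGraph V} [DecidableRel G.Adj]

theorem indicator_dotProduct_adjMatrix_mulVec_indicator {S : Set V} (hS : G.IsIndepSet S)
    (x : V → R) : S.indicator x ⬝ᵥ G.adjMatrix R *ᵥ S.indicator x = 0 := by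
  refine Finset.sum_eq_zero fun u _ => ?_
  by_cases hu : u ∈ S
  · rw [adjMatrix_mulVec_apply, Finset.sum_eq_zero, mul_zero]
    intro v hv
    rw [mem_neighborFinset] at hv
    exact Set.indicator_of_notMem (fun hvS => hS hu hvS hv.ne hv) x
  · rw [Set.indicator_of_notMem hu, zero_mul]

variable (G) in
theorem sum_sum_neighborFinset (f : V → R) :
    ∑ v, ∑ u ∈ G.neighborFinset v, f u = ∑ u, G.degree u * f u := by
  rw [Finset.sum_comm' (t' := Finset.univ) (s' := fun u => G.neighborFinset u)
    (by simp [G.adj_comm])]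
  simp only [Finset.sum_const, card_neighborFinset_eq_degree, nsmul_eq_mul]

end Semiring

section OrderedRing

variable {R V : Type*} [CommRing R] [LinearOrder R] [IsStrictOrderedRing R] [StarRing R]
  [TrivialStar R] [Fintype V]

theorem sq_dotProduct_mulVec_le_of_posSemidef {M : Matrix V V R} (hM : M.PosSemidef)
    (x y : V → R) : (x ⬝ᵥ M *ᵥ y) ^ 2 ≤ (x ⬝ᵥ M *ᵥ x) * (y ⬝ᵥ M *ᵥ y) := by
  classical
  have hsymm : (toBilin' M).IsSymm :=
    isSymm_toBilin'_iff_isSymm.2 (isHermitian_iff_isSymm.1 hM.isHermitian)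
  have hnonneg (z : V → R) : 0 ≤ toBilin' M z z := by
    simpa only [toBilin'_apply', star_trivial] using hM.dotProduct_mulVec_nonneg z
  simpa only [toBilin'_apply'] using
    LinearMap.BilinForm.apply_sq_le_of_symm (toBilin' M) hnonneg
      (LinearMap.BilinForm.isSymm_iff.1 hsymm) x y

variable {G : SimpleGraph V} [DecidableRel G.Adj] {l m : R} {x : V → R}

theorem sub_mul_sum_sq_le_of_isIndepSet [DecidableEq V]
    (hpsd : (G.adjMatrix R - l • (1 : Matrix V V R)).PosSemidef)
    (hx : G.adjMatrix R *ᵥ x = m • x) {S : Finset V} (hS : G.IsIndepSet S) :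
    (m - l) * ∑ u ∈ S, x u ^ 2 ≤ -l * ∑ u, x u ^ 2 := by
  set B := G.adjMatrix R - l • (1 : Matrix V V R) with hB
  set y := (S : Set V).indicator x with hy
  have hyx : y ⬝ᵥ x = ∑ u ∈ S, x u ^ 2 := by
    simp [dotProduct, hy, Set.indicator_apply, sq]
  have hyy : y ⬝ᵥ y = ∑ u ∈ S, x u ^ 2 := by
    simp [dotProduct, hy, Set.indicator_apply, sq]
  have hxx : x ⬝ᵥ x = ∑ u, x u ^ 2 := by simp only [dotProduct, sq]
  have hBx : B *ᵥ x = (m - l) • x := by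
    rw [hB, sub_mulVec, hx, smul_mulVec, one_mulVec, sub_smul]
  have hyBy : y ⬝ᵥ B *ᵥ y = -l * ∑ u ∈ S, x u ^ 2 := by
    rw [hB, sub_mulVec, dotProduct_sub, indicator_dotProduct_adjMatrix_mulVec_indicator hS,
      smul_mulVec, one_mulVec, dotProduct_smul, hyy, smul_eq_mul, zero_sub, neg_mul]
  have cauchy_schwarz := sq_dotProduct_mulVec_le_of_posSemidef hpsd y x
  rw [hyBy, hBx, dotProduct_smul, dotProduct_smul, hyx, hxx, smul_eq_mul, smul_eq_mul]
    at cauchy_schwarz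
  have rhs_nonneg : 0 ≤ -l * ∑ u, x u ^ 2 := by
    rw [Finset.mul_sum]
    refine Finset.sum_nonneg fun v _ => mul_nonneg ?_ (sq_nonneg _)
    simpa [hB] using hpsd.diag_nonneg (i := v)
  by_contra! h
  have lhs_pos : 0 < (m - l) * ∑ u ∈ S, x u ^ 2 := rhs_nonneg.trans_lt h
  refine h.not_ge (le_of_mul_le_mul_left ?_ lhs_pos)
  linear_combination cauchy_schwarz

end OrderedRing

theorem mul_sum_sq_le_sum_degree_mul_sq {R V : Type*} [Field R] [LinearOrder R]
    [IsStrictOrderedRing R] [StarRing R] [TrivialStar R] [Fintype V] {G : SimpleGraph V}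
    [DecidableRel G.Adj] {m : R} {x : V → R} (hx : G.adjMatrix R *ᵥ x = m • x) :
    m * ∑ u, x u ^ 2 ≤ ∑ u, G.degree u * x u ^ 2 := by
  classical
  have laplacian_nonneg := (G.posSemidef_lapMatrix R).dotProduct_mulVec_nonneg x
  rw [star_trivial, lapMatrix, sub_mulVec, dotProduct_sub, dotProduct_mulVec_degMatrix, hx,
    dotProduct_smul, smul_eq_mul, sub_nonneg] at laplacian_nonneg
  simpa only [dotProduct, sq, mul_assoc] using laplacian_nonneg

theorem triangle_free_eigenvalue_sq_bound_general {V : Type*} [Fintype V] [DecidableEq V]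
    (G : SimpleGraph V) [DecidableRel G.Adj] (hG : G.CliqueFree 3) {l m : ℝ}
    (hl : l ∈ lowerBounds (spectrum ℝ (G.adjMatrix ℝ))) (hm : m ∈ spectrum ℝ (G.adjMatrix ℝ)) :
    m ^ 2 ≤ -l * (Fintype.card V - m) := by
  have hpsd := posSemidef_sub_smul_one_of_mem_lowerBounds_spectrum (G.isHermitian_adjMatrix ℝ) hl
  obtain ⟨x, hx0, hx⟩ := exists_ne_zero_mulVec_eq_smul_of_mem_spectrum hm
  have sum_sq_pos : 0 < ∑ u, x u ^ 2 := by
    simpa only [dotProduct, sq, star_trivial] using dotProduct_star_self_pos_iff.2 hx0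
  have neighborhood_bound (v : V) :
      (m - l) * ∑ u ∈ G.neighborFinset v, x u ^ 2 ≤ -l * ∑ u, x u ^ 2 :=
    sub_mul_sum_sq_le_of_isIndepSet hpsd hx <| by
      simpa only [coe_neighborFinset] using isIndepSet_neighborSet_of_triangleFree G hG v
  have scaled_bound : (m - l) * m * ∑ u, x u ^ 2 ≤ Fintype.card V * -l * ∑ u, x u ^ 2 :=
    calc (m - l) * m * ∑ u, x u ^ 2
        = (m - l) * (m * ∑ u, x u ^ 2) := mul_assoc ..
      _ ≤ (m - l) * ∑ u, G.degree u * x u ^ 2 :=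
        mul_le_mul_of_nonneg_left (mul_sum_sq_le_sum_degree_mul_sq hx) (sub_nonneg.2 (hl hm))
      _ = ∑ v, (m - l) * ∑ u ∈ G.neighborFinset v, x u ^ 2 := by
        rw [← sum_sum_neighborFinset, Finset.mul_sum]
      _ ≤ ∑ _v : V, -l * ∑ u, x u ^ 2 := Finset.sum_le_sum fun v _ => neighborhood_bound v
      _ = Fintype.card V * -l * ∑ u, x u ^ 2 := by
        rw [Finset.sum_const, Finset.card_univ, nsmul_eq_mul, mul_assoc]
  linarith [le_of_mul_le_mul_right scaled_bound sum_sq_pos]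

/-- Let `G` be a triangle-free simple graph on `n` vertices with
adjacency-matrix eigenvalues `μ₁ ≥ ⋯ ≥ μₙ`. Then `μ₁² ≤ (-μₙ)(n - μ₁)`. -/
theorem triangle_free_eigenvalue_sq_bound
    (n : ℕ) (hn : 0 < n) (G : SimpleGraph (Fin n)) [DecidableRel G.Adj]
    (hG : G.CliqueFree 3)
    (hA : (G.adjMatrix ℝ).IsHermitian)
    (μ : Fin n → ℝ) (hmono : Antitone μ)
    (hperm : ∃ σ : Equiv.Perm (Fin n), ∀ i, μ i = hA.eigenvalues (σ i)) :
    μ ⟨0, hn⟩ ^ 2 ≤ (-μ ⟨n - 1, by omega⟩) * ((n : ℝ) - μ ⟨0, hn⟩) := by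
  have hspec := spectrum_eq_range_of_eigenvalues_perm hA hperm
  simpa only [Fintype.card_fin] using triangle_free_eigenvalue_sq_bound_general G hG
    (hspec ▸ Set.forall_mem_range.2 fun i => hmono (Nat.le_sub_one_of_lt i.isLt))
    (hspec ▸ Set.mem_range_self _)
end

section
/- Let $G$ be a simple graph that is strongly regular with parameters $(n, k, 0, b)$ with $k \geq 1$, and let $\mu_1 \geq \mu_2 \geq \dots \geq \mu_n$ be its adjacency-matrix eigenvalues. If the second-largest eigenvalue satisfies $\mu_2 > 0$, then $n > \mu_n^2$. -/
open Matrix SimpleGraph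

/-!
An eigenvector of `G` orthogonal to the all-ones vector has an eigenvalue `θ` satisfying
`θ² + bθ + (b - k) = 0`. If two eigenvalues are positive, one of them is such a root, which forces
`b < k`; then the quadratic has exactly one nonpositive root, so all nonpositive eigenvalues
coincide with `μₙ`. The neighbours of a vertex are independent, so by the inertia bound there are at
least `k` nonpositive eigenvalues. Comparing with `∑ μᵢ² = kn` gives `k μₙ² < kn`, strictly because
some eigenvalue is positive.
-/

section Hermitian

variable {ι : Type*} [Fintype ι] [DecidableEq ι]

theorem trace_pow_eq_sum_eigenvalues_pow {𝕜 : Type*} [RCLike 𝕜] {A : Matrix ι ι 𝕜}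
    (hA : A.IsHermitian) (m : ℕ) : (A ^ m).trace = ∑ i, (hA.eigenvalues i : 𝕜) ^ m := by
  conv_lhs =>
    rw [hA.spectral_theorem, ← map_pow, Unitary.conjStarAlgAut_apply, trace_mul_comm,
      ← mul_assoc, Unitary.coe_star_mul_self, one_mul, diagonal_pow, trace_diagonal]
  rfl

theorem eigenvectorBasis_ofLp_ne_zero {𝕜 : Type*} [RCLike 𝕜] {A : Matrix ι ι 𝕜}
    (hA : A.IsHermitian) (i : ι) : (hA.eigenvectorBasis i).ofLp ≠ 0 :=
  (WithLp.ofLp_eq_zero 2).ne.mpr (hA.eigenvectorBasis.orthonormal.ne_zero i)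

theorem toQuadraticForm'_apply {R : Type*} [CommRing R] (A : Matrix ι ι R) (x : ι → R) :
    A.toQuadraticForm' x = x ⬝ᵥ A *ᵥ x :=
  A.toLinearMap₂'_apply' x x

theorem toQuadraticForm'_equivalent_weightedSumSquares_eigenvalues {A : Matrix ι ι ℝ}
    (hA : A.IsHermitian) :
    A.toQuadraticForm'.Equivalent (QuadraticMap.weightedSumSquares ℝ hA.eigenvalues) := by
  refine QuadraticMap.Equivalent.symm
    ⟨⟨UnitaryGroup.toLinearEquiv hA.eigenvectorUnitary, fun x ↦ ?_⟩⟩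
  set U : Matrix ι ι ℝ := hA.eigenvectorUnitary.1
  have hdiag : Uᵀ * A * U = diagonal hA.eigenvalues := by
    have := hA.conjStarAlgAut_star_eigenvectorUnitary
    rwa [Unitary.conjStarAlgAut_star_apply] at this
  calc A.toQuadraticForm' (U *ᵥ x)
      = x ⬝ᵥ (Uᵀ * A * U) *ᵥ x := by
        rw [toQuadraticForm'_apply, ← mulVec_mulVec, ← mulVec_mulVec, dotProduct_mulVec x,
          vecMul_transpose]
    _ = QuadraticMap.weightedSumSquares ℝ hA.eigenvalues x := by
        simp only [hdiag, dotProduct, mulVec_diagonal, QuadraticMap.weightedSumSquares_apply,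
          smul_eq_mul, mul_left_comm]

theorem finrank_le_card_eigenvalues_nonpos {A : Matrix ι ι ℝ} (hA : A.IsHermitian)
    {W : Submodule ℝ (ι → ℝ)} (hW : ∀ x ∈ W, x ⬝ᵥ A *ᵥ x ≤ 0) :
    Module.finrank ℝ W ≤ Finset.card {i | hA.eigenvalues i ≤ 0} := by
  have hsig : sigPos A.toQuadraticForm' = Finset.card {i | 0 < hA.eigenvalues i} := by
    rw [QuadraticForm.sigPos_of_equiv_weightedSumSquares
      (toQuadraticForm'_equivalent_weightedSumSquares_eigenvalues hA),
      ← Set.ncard_coe_finset, Finset.coe_filter_univ]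
  have hle : sigPos A.toQuadraticForm' + Module.finrank ℝ W ≤ Module.finrank ℝ (ι → ℝ) :=
    QuadraticForm.sigPos_add_finrank_le_of_nonpos fun x hx ↦ by
      simpa only [toQuadraticForm'_apply] using hW x hx
  have hcount := Finset.card_filter_add_card_filter_not (s := .univ) (0 < hA.eigenvalues ·)
  simp only [not_lt, Finset.card_univ] at hcount
  rw [Module.finrank_fintype_fun_eq_card] at hle
  lia

theorem card_le_card_eigenvalues_nonpos {A : Matrix ι ι ℝ} (hA : A.IsHermitian) {s : Finset ι}
    (hs : ∀ i ∈ s, ∀ j ∈ s, A i j = 0) : s.card ≤ Finset.card {i | hA.eigenvalues i ≤ 0} := by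
  have hW : ∀ x ∈ Pi.spanSubset ℝ (s : Set ι), x ⬝ᵥ A *ᵥ x ≤ 0 := by
    intro x hx
    have hx0 : ∀ i ∉ s, x i = 0 := fun i hi ↦ Pi.mem_spanSubset_iff.mp hx i hi
    refine (Finset.sum_eq_zero fun i _ ↦ mul_eq_zero.mpr ?_).le
    refine (em' (i ∈ s)).imp (hx0 i) fun hi ↦ Finset.sum_eq_zero fun j _ ↦ mul_eq_zero.mpr ?_
    exact (em (j ∈ s)).imp (hs i hi j) (hx0 j)
  simpa only [Pi.dim_spanSubset, Set.ncard_coe_finset] using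
    finrank_le_card_eigenvalues_nonpos hA hW

end Hermitian

theorem eq_of_nonpos_of_quadratic_eq_zero {K : Type*} [CommRing K] [LinearOrder K]
    [IsStrictOrderedRing K] {p c x y : K} (hc : c < 0) (hx : x ≤ 0) (hy : y ≤ 0)
    (hpx : x ^ 2 + p * x + c = 0) (hpy : y ^ 2 + p * y + c = 0) : x = y := by
  have hfactor : (x - y) * (x + y + p) = 0 := by linear_combination hpx - hpy
  refine sub_eq_zero.mp ((mul_eq_zero.mp hfactor).resolve_right fun hsum ↦ hc.not_ge ?_)
  -- If `x` and `y` were the two roots, their product `c` would be nonnegative.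
  calc 0 ≤ x * y := mul_nonneg_of_nonpos_of_nonpos hx hy
    _ = c := by linear_combination x * hsum - hpx

section Graph

variable {V : Type*} [Fintype V] {G : SimpleGraph V} [DecidableRel G.Adj]

theorem degree_le_indepNum_of_cliqueFree_three (h : G.CliqueFree 3) (v : V) :
    G.degree v ≤ G.indepNum := by
  have hv : G.IsIndepSet (G.neighborFinset v : Set V) := by
    simpa only [coe_neighborFinset] using isIndepSet_neighborSet_of_triangleFree G h v
  exact hv.card_le_indepNum

theorem sum_eq_zero_of_eigenvalue_ne_degree {R : Type*} [CommRing R] [IsDomain R] {k : ℕ}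
    (hG : G.IsRegularOfDegree k) {v : V → R} {θ : R} (hv : G.adjMatrix R *ᵥ v = θ • v)
    (hθ : θ ≠ k) : ∑ x, v x = 0 := by
  have hsum : θ * ∑ x, v x = k * ∑ x, v x := by
    calc θ * ∑ x, v x = 1 ⬝ᵥ G.adjMatrix R *ᵥ v := by
          rw [hv, dotProduct_smul, one_dotProduct, smul_eq_mul]
      _ = k * ∑ x, v x := by
          rw [dotProduct_mulVec]
          simp [dotProduct, hG.degree_eq, Finset.mul_sum]
  by_contra h
  exact hθ (mul_right_cancel₀ h hsum)

variable [DecidableEq V]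

theorem indepNum_le_card_eigenvalues_nonpos (hA : (G.adjMatrix ℝ).IsHermitian) :
    G.indepNum ≤ Finset.card {i | hA.eigenvalues i ≤ 0} := by
  obtain ⟨s, hs⟩ := G.exists_isNIndepSet_indepNum
  rw [← hs.card_eq]
  refine card_le_card_eigenvalues_nonpos hA fun i hi j hj ↦ ?_
  have hij : ¬ G.Adj i j := fun hadj ↦ hs.isIndepSet hi hj hadj.ne hadj
  simp only [adjMatrix_apply, hij, if_false]

theorem sum_eigenvalues_adjMatrix_eq_zero (hA : (G.adjMatrix ℝ).IsHermitian) :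
    ∑ i, hA.eigenvalues i = 0 := by
  simpa using hA.trace_eq_sum_eigenvalues.symm

theorem sum_sq_eigenvalues_adjMatrix_eq_sum_degree (hA : (G.adjMatrix ℝ).IsHermitian) :
    ∑ i, hA.eigenvalues i ^ 2 = ∑ v, (G.degree v : ℝ) := by
  calc ∑ i, hA.eigenvalues i ^ 2 = (G.adjMatrix ℝ ^ 2).trace :=
        (trace_pow_eq_sum_eigenvalues_pow hA 2).symm
    _ = ∑ v, (G.degree v : ℝ) := by
        simp only [sq, trace, diag_apply, adjMatrix_mul_self_apply_self]

end Graph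

section StronglyRegular

variable {V : Type*} [Fintype V] {G : SimpleGraph V} [DecidableRel G.Adj] {n k a b : ℕ}

theorem cliqueFree_three_of_isSRGWith (hG : G.IsSRGWith n k 0 b) : G.CliqueFree 3 := by
  classical
  intro s hs
  obtain ⟨x, y, z, hxy, hxz, hyz, -⟩ := is3Clique_iff.mp hs
  have : IsEmpty (G.commonNeighbors x y) := Fintype.card_eq_zero_iff.mp (hG.of_adj x y hxy)
  exact this.false ⟨z, hxz, hyz⟩

section Eigenvector

variable {R : Type*} [CommRing R] {v w : V → R} {θ η : R}

theorem quadratic_mul_eigenvector_apply (hG : G.IsSRGWith n k a b)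
    (hv : G.adjMatrix R *ᵥ v = θ • v) (x : V) :
    (θ ^ 2 + (b - a) * θ + (b - k)) * v x = b * ∑ y, v y := by
  classical
  have hcompl : Gᶜ.adjMatrix R = of 1 - 1 - G.adjMatrix R := by
    rw [← G.one_add_adjMatrix_add_compl_adjMatrix_eq_of_one R,
      compl_adjMatrix_eq_adjMatrix_compl]
    abel
  have hones : (of 1 : Matrix V V R) *ᵥ v = fun _ ↦ ∑ y, v y := by
    ext; simp [mulVec, dotProduct]
  have hsq := congrArg (fun M ↦ (M *ᵥ v) x) (hG.matrix_eq (α := R))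
  simp only [← Nat.cast_smul_eq_nsmul R, hcompl, sq, ← mulVec_mulVec, hv, mulVec_smul,
    add_mulVec, sub_mulVec, smul_mulVec, one_mulVec, hones, Pi.add_apply, Pi.sub_apply,
    Pi.smul_apply, smul_eq_mul] at hsq
  linear_combination hsq

variable [IsDomain R]

theorem eigenvalue_eq_degree_or_quadratic_eq_zero (hG : G.IsSRGWith n k a b)
    (hv : G.adjMatrix R *ᵥ v = θ • v) (hv0 : v ≠ 0) :
    θ = k ∨ θ ^ 2 + (b - a) * θ + (b - k) = 0 := by
  refine or_iff_not_imp_left.mpr fun hθ ↦ ?_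
  obtain ⟨x, hx⟩ := Function.ne_iff.mp hv0
  have hq := quadratic_mul_eigenvector_apply hG hv x
  rw [sum_eq_zero_of_eigenvalue_ne_degree hG.regular hv hθ, mul_zero] at hq
  exact (mul_eq_zero.mp hq).resolve_right hx

-- An eigenvector whose eigenvalue is not a root is constant, and nonzero constant vectors are
-- never orthogonal.
theorem quadratic_eq_zero_or_of_orthogonal [CharZero R] (hG : G.IsSRGWith n k a b)
    (hv : G.adjMatrix R *ᵥ v = θ • v) (hw : G.adjMatrix R *ᵥ w = η • w)
    (hv0 : v ≠ 0) (hw0 : w ≠ 0) (hvw : v ⬝ᵥ w = 0) :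
    θ ^ 2 + (b - a) * θ + (b - k) = 0 ∨ η ^ 2 + (b - a) * η + (b - k) = 0 := by
  by_contra! ⟨hθ, hη⟩
  obtain ⟨x, hx⟩ := Function.ne_iff.mp hv0
  obtain ⟨y, hy⟩ := Function.ne_iff.mp hw0
  have hvx : v = fun _ ↦ v x := funext fun z ↦ mul_left_cancel₀ hθ <| by
    simp only [quadratic_mul_eigenvector_apply hG hv]
  have hwy : w = fun _ ↦ w y := funext fun z ↦ mul_left_cancel₀ hη <| by
    simp only [quadratic_mul_eigenvector_apply hG hw]
  have hcard : (Fintype.card V : R) ≠ 0 := Nat.cast_ne_zero.mpr (Fintype.card_pos_iff.mpr ⟨x⟩).ne'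
  have hprod : (Fintype.card V : R) * (v x * w y) = 0 := by
    rw [← hvw, hvx, hwy]
    simp [dotProduct]
  exact mul_ne_zero hcard (mul_ne_zero hx hy) hprod

end Eigenvector

variable [DecidableEq V] {i j : V}

theorem lt_degree_of_two_eigenvalues_pos (hG : G.IsSRGWith n k a b) (hab : a ≤ b)
    (hA : (G.adjMatrix ℝ).IsHermitian) (hij : i ≠ j) (hi : 0 < hA.eigenvalues i)
    (hj : 0 < hA.eigenvalues j) : b < k := by
  have horth : (hA.eigenvectorBasis i).ofLp ⬝ᵥ (hA.eigenvectorBasis j).ofLp = 0 := by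
    simpa [EuclideanSpace.inner_eq_star_dotProduct] using
      hA.eigenvectorBasis.orthonormal.2 hij.symm
  have hlt {r : ℝ} (hr : 0 < r) (hroot : r ^ 2 + (b - a) * r + (b - k) = 0) : b < k := by
    have hab' : (0 : ℝ) ≤ b - a := sub_nonneg.mpr (Nat.cast_le.mpr hab)
    have : (0 : ℝ) < r ^ 2 + (b - a) * r := by positivity
    exact_mod_cast (by linarith : (b : ℝ) < k)
  exact (quadratic_eq_zero_or_of_orthogonal hG (hA.mulVec_eigenvectorBasis i)
    (hA.mulVec_eigenvectorBasis j) (eigenvectorBasis_ofLp_ne_zero hA i)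
    (eigenvectorBasis_ofLp_ne_zero hA j) horth).elim (hlt hi) (hlt hj)

theorem eigenvalues_eq_of_nonpos (hG : G.IsSRGWith n k a b) (hbk : b < k)
    (hA : (G.adjMatrix ℝ).IsHermitian) (hi : hA.eigenvalues i ≤ 0) (hj : hA.eigenvalues j ≤ 0) :
    hA.eigenvalues i = hA.eigenvalues j := by
  have hbk' : (b : ℝ) < k := Nat.cast_lt.mpr hbk
  have hroot {l : V} (hl : hA.eigenvalues l ≤ 0) :
      hA.eigenvalues l ^ 2 + (b - a) * hA.eigenvalues l + (b - k) = 0 := by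
    refine (eigenvalue_eq_degree_or_quadratic_eq_zero hG (hA.mulVec_eigenvectorBasis l)
      (eigenvectorBasis_ofLp_ne_zero hA l)).resolve_left ?_
    exact (hl.trans_lt (b.cast_nonneg.trans_lt hbk')).ne
  exact eq_of_nonpos_of_quadratic_eq_zero (sub_neg.mpr hbk') hi hj (hroot hi) (hroot hj)

theorem eigenvalues_sq_lt_card_of_nonpos (hG : G.IsSRGWith n k 0 b) (hbk : b < k)
    (hA : (G.adjMatrix ℝ).IsHermitian) (hi : hA.eigenvalues i ≤ 0) :
    hA.eigenvalues i ^ 2 < n := by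
  obtain hi0 | hneg := hi.eq_or_lt
  · have hn : 0 < n := hG.card ▸ Fintype.card_pos_iff.mpr ⟨i⟩
    simpa [hi0] using hn
  obtain ⟨j, -, hj⟩ := Finset.exists_pos_of_sum_zero_of_exists_nonzero _
    (sum_eigenvalues_adjMatrix_eq_zero hA) ⟨i, Finset.mem_univ i, hneg.ne⟩
  let N : Finset V := {l | hA.eigenvalues l ≤ 0}
  have hkN : k ≤ N.card :=
    calc k = G.degree i := (hG.regular.degree_eq i).symm
      _ ≤ G.indepNum := degree_le_indepNum_of_cliqueFree_three (cliqueFree_three_of_isSRGWith hG) i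
      _ ≤ N.card := indepNum_le_card_eigenvalues_nonpos hA
  refine lt_of_mul_lt_mul_left (a := (k : ℝ)) ?_ k.cast_nonneg
  calc k * hA.eigenvalues i ^ 2 ≤ N.card * hA.eigenvalues i ^ 2 := by gcongr
    _ = ∑ l ∈ N, hA.eigenvalues l ^ 2 := by
        rw [← nsmul_eq_mul, ← Finset.sum_const]
        refine Finset.sum_congr rfl fun l hl ↦ ?_
        rw [eigenvalues_eq_of_nonpos hG hbk hA hi (Finset.mem_filter.mp hl).2]
    _ < ∑ l, hA.eigenvalues l ^ 2 :=
        Finset.sum_lt_sum_of_subset N.subset_univ (Finset.mem_univ j)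
          (fun hjN ↦ hj.not_ge (Finset.mem_filter.mp hjN).2) (by positivity)
          fun l _ _ ↦ sq_nonneg _
    _ = k * n := by
        simp [sum_sq_eigenvalues_adjMatrix_eq_sum_degree hA, hG.regular.degree_eq, hG.card,
          mul_comm]

end StronglyRegular

theorem srg_card_gt_min_eigenvalue_sq_general {V : Type*} [Fintype V] [DecidableEq V]
    {n k b : ℕ} (hn : 1 < n) {G : SimpleGraph V} [DecidableRel G.Adj] (hG : G.IsSRGWith n k 0 b)
    (hA : (G.adjMatrix ℝ).IsHermitian) {μ : Fin n → ℝ} (hμ : Antitone μ) (σ : Fin n ≃ V)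
    (hσ : ∀ i, μ i = hA.eigenvalues (σ i)) (hμ2 : 0 < μ ⟨1, hn⟩) :
    μ ⟨n - 1, by lia⟩ ^ 2 < (n : ℝ) := by
  have hμ1 : 0 < μ ⟨0, by lia⟩ := hμ2.trans_le (hμ (Nat.zero_le 1))
  have hbk : b < k := by
    rw [hσ] at hμ1 hμ2
    exact lt_degree_of_two_eigenvalues_pos hG (Nat.zero_le b) hA (σ.injective.ne (by simp)) hμ1 hμ2
  have hμn : μ ⟨n - 1, by lia⟩ ≤ 0 := by
    have hsum : ∑ i, μ i ≤ ∑ _i : Fin n, (0 : ℝ) := by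
      simp only [hσ, σ.sum_comp, sum_eigenvalues_adjMatrix_eq_zero, Finset.sum_const_zero, le_refl]
    obtain ⟨i, -, hi⟩ := Finset.exists_le_of_sum_le ⟨⟨0, by lia⟩, Finset.mem_univ _⟩ hsum
    exact (hμ (Nat.le_sub_one_of_lt i.isLt)).trans hi
  rw [hσ] at hμn ⊢
  exact eigenvalues_sq_lt_card_of_nonpos hG hbk hA hμn

/-- Let `G` be strongly regular with parameters `(n, k, 0, b)`, `k ≥ 1`,
with adjacency-matrix eigenvalues `μ₁ ≥ μ₂ ≥ ⋯ ≥ μₙ`. If the second-largest eigenvalue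
satisfies `μ₂ > 0`, then `n > μₙ²`. (The hypothesis `1 < n` ensures that the
second-largest eigenvalue exists.) -/
theorem srg_card_gt_min_eigenvalue_sq
    (n k b : ℕ) (hn : 1 < n) (G : SimpleGraph (Fin n)) [DecidableRel G.Adj]
    (hsrg : G.IsSRGWith n k 0 b) (hk : 1 ≤ k)
    (hA : (G.adjMatrix ℝ).IsHermitian)
    (μ : Fin n → ℝ) (hmono : Antitone μ)
    (hperm : ∃ σ : Equiv.Perm (Fin n), ∀ i, μ i = hA.eigenvalues (σ i))
    (hμ2 : 0 < μ ⟨1, hn⟩) :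
    μ ⟨n - 1, by omega⟩ ^ 2 < (n : ℝ) := by
  obtain ⟨σ, hσ⟩ := hperm
  exact srg_card_gt_min_eigenvalue_sq_general hn hsrg hA hmono σ hσ hμ2
end
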